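/- arXiv:2004.05330 — 3 statements merged into one kernel-verified Lean document; each statement's English description precedes it below -/
import Mathlib

section
/- Let C be a singly even self-dual code of length n with shadow S. If it is not the case that n ≡ 22 (mod 24) and d(C) = 4⌊n/24⌋ + 6, then d(S) ≤ n/2 + 4 − 2·d(C); and if n ≡ 22 (mod 24) and d(C) = 4⌊n/24⌋ + 6, then d(S) = n/2 + 8 − 2·d(C). -/
open Finset

/-- Hamming weight of a binary vector. -/
def wt {n : ℕ} (x : Fin n → ZMod 2) : ℕ := hammingNorm x

/-- The dual of a set of binary vectors with respect to the standard inner product. -/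
def dualSet {n : ℕ} (C : Set (Fin n → ZMod 2)) : Set (Fin n → ZMod 2) :=
  {x | ∀ y ∈ C, ∑ i, x i * y i = 0}

/-- A binary linear code is self-dual if it equals its dual code. -/
def IsSelfDual {n : ℕ} (C : Submodule (ZMod 2) (Fin n → ZMod 2)) : Prop :=
  (C : Set (Fin n → ZMod 2)) = dualSet (C : Set (Fin n → ZMod 2))

/-- A self-dual code is singly even if some codeword has weight not divisible by 4. -/
def IsSinglyEvenSelfDual {n : ℕ} (C : Submodule (ZMod 2) (Fin n → ZMod 2)) : Prop :=
  IsSelfDual C ∧ ∃ x ∈ C, ¬ (4 ∣ wt x)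

/-- The doubly even subcode `C₀` of `C` (as a set): codewords of weight ≡ 0 (mod 4). -/
def evenSub {n : ℕ} (C : Submodule (ZMod 2) (Fin n → ZMod 2)) : Set (Fin n → ZMod 2) :=
  {x | x ∈ C ∧ 4 ∣ wt x}

/-- The shadow `S = C₀^⊥ \ C` of a singly even self-dual code. -/
def shadow {n : ℕ} (C : Submodule (ZMod 2) (Fin n → ZMod 2)) : Set (Fin n → ZMod 2) :=
  dualSet (evenSub C) \ (C : Set (Fin n → ZMod 2))

/-- The minimum (nonzero) weight of a set of vectors. -/
noncomputable def minWtSet {n : ℕ} (S : Set (Fin n → ZMod 2)) : ℕ :=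
  sInf {w | ∃ x ∈ S, x ≠ 0 ∧ wt x = w}

/-- The minimum weight of a code. -/
noncomputable def minWt {n : ℕ} (C : Submodule (ZMod 2) (Fin n → ZMod 2)) : ℕ :=
  minWtSet (C : Set (Fin n → ZMod 2))

/-- A singly even self-dual code of length `n` is s-extremal if
`d(S) = n/2 + 4 - 2 d(C)`. -/
def IsSExtremal {n : ℕ} (C : Submodule (ZMod 2) (Fin n → ZMod 2)) : Prop :=
  IsSinglyEvenSelfDual C ∧
    (minWtSet (shadow C) : ℤ) = ((n / 2 : ℕ) : ℤ) + 4 - 2 * (minWt C : ℤ)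

/-- Two codes are equivalent if one is obtained from the other by permuting coordinates. -/
def CodeEquiv {n : ℕ} (C D : Submodule (ZMod 2) (Fin n → ZMod 2)) : Prop :=
  ∃ σ : Equiv.Perm (Fin n),
    Submodule.map (LinearMap.funLeft (ZMod 2) (ZMod 2) σ) C = D

/-- The neighbor `C₀ ∪ (t + C₀)` of `C` obtained from a shadow vector `t`:
the span of the doubly even subcode together with `t`. -/
def neighborCode {n : ℕ} (C : Submodule (ZMod 2) (Fin n → ZMod 2))
    (t : Fin n → ZMod 2) : Submodule (ZMod 2) (Fin n → ZMod 2) :=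
  Submodule.span (ZMod 2) (evenSub C ∪ {t})

section ps
open PowerSeries

/-- coefficientwise nonneg with constant coefficient positive -/
def GoodPS (f : PowerSeries ℝ) : Prop := (∀ k, 0 ≤ coeff k f) ∧ 0 < coeff 0 f

lemma GoodPS.one : GoodPS 1 := by
  refine ⟨fun k => ?_, by simp⟩
  rw [coeff_one]; split_ifs <;> norm_num

lemma GoodPS.mul {f g : PowerSeries ℝ} (hf : GoodPS f) (hg : GoodPS g) : GoodPS (f * g) := by
  refine ⟨fun k => ?_, ?_⟩
  · rw [coeff_mul]
    exact Finset.sum_nonneg fun p _ => mul_nonneg (hf.1 _) (hg.1 _)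
  · rw [coeff_mul]; simpa using mul_pos hf.2 hg.2

lemma GoodPS.pow {f : PowerSeries ℝ} (hf : GoodPS f) (k : ℕ) : GoodPS (f ^ k) := by
  induction k with
  | zero => simpa using GoodPS.one
  | succ k ih => rw [pow_succ]; exact ih.mul hf

lemma GoodPS.mul_pos {f g : PowerSeries ℝ} (hf : GoodPS f) (hg : ∀ k, 0 < coeff k g) (k : ℕ) :
    0 < coeff k (f * g) := by
  rw [coeff_mul]
  refine Finset.sum_pos' (fun p _ => mul_nonneg (hf.1 _) (hg _).le) ⟨(0, k), by simp, ?_⟩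
  exact _root_.mul_pos hf.2 (hg _)

/-- `1/(1-X)` -/
noncomputable def Qs : PowerSeries ℝ := PowerSeries.mk fun _ => 1
/-- `1/(1+X)` -/
noncomputable def Ps : PowerSeries ℝ := PowerSeries.mk fun k => (-1) ^ k

lemma Qs_mul : Qs * (1 - X) = 1 := by
  exact PowerSeries.mk_one_mul_one_sub_eq_one ℝ

lemma evalNeg_Qs : evalNegHom Qs = Ps := by
  ext k; simp [evalNegHom, Qs, Ps, coeff_rescale]

lemma evalNeg_Ps : evalNegHom Ps = Qs := by
  ext k; simp [evalNegHom, Qs, Ps, coeff_rescale, ← mul_pow]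

lemma Ps_mul : Ps * (1 + X) = 1 := by
  have := congrArg evalNegHom Qs_mul
  simpa [evalNeg_Qs] using this

lemma coeff_evalNeg (f : PowerSeries ℝ) (k : ℕ) :
    coeff k (evalNegHom f) = (-1) ^ k * coeff k f := by
  simp [evalNegHom, coeff_rescale]

lemma PQ_good : GoodPS (Ps * Qs) := by
  have h : ∀ k, coeff k (Ps * Qs) = if Even k then 1 else 0 := by
    intro k
    rw [coeff_mul, Finset.Nat.sum_antidiagonal_eq_sum_range_succ_mk]
    simp only [Ps, Qs, coeff_mk, mul_one]
    rw [neg_one_geom_sum]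
    by_cases hk : Even k
    · simp [hk, Nat.even_add_one]
    · simp [hk, Nat.even_add_one]
  constructor
  · intro k; rw [h]; split_ifs <;> norm_num
  · rw [h]; simp

lemma p_good : GoodPS (1 + X) := by
  constructor
  · intro k
    rw [map_add, coeff_one, coeff_X]
    split_ifs <;> norm_num
  · simp

lemma Qs_pos (k : ℕ) : 0 < coeff k Qs := by simp [Qs]

lemma Qs_good : GoodPS Qs := ⟨fun k => (Qs_pos k).le, Qs_pos 0⟩

/-- Sign analysis of the Bürmann–Lagrange coefficient. -/
lemma coeff_G_ne_zero_iff (N i : ℕ) (hi : 1 ≤ i) :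
    coeff (i - 1) (Ps ^ (N + 1) * (1 + X) ^ (4 * i) * Qs ^ (2 * i)) ≠ 0 ↔
      ¬ (N + 1 = 6 * i ∧ Even i) := by
  have hPp : (1 + X) * Ps = 1 := by rw [mul_comm]; exact Ps_mul
  rcases lt_trichotomy (N + 1) (6 * i) with h | h | h
  · obtain ⟨e, he⟩ : ∃ e, 6 * i = N + 1 + (e + 1) := ⟨6 * i - (N + 1) - 1, by omega⟩
    obtain ⟨m, hm⟩ : ∃ m, 2 * i = m + 1 := ⟨2 * i - 1, by omega⟩
    have hG : Ps ^ (N + 1) * (1 + X) ^ (4 * i) * Qs ^ (2 * i)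
        = ((1 + X) ^ e * (Ps * Qs) ^ m) * Qs := by
      have h1 : (Ps * (1 + X)) ^ (2 * i) = 1 := by rw [Ps_mul, one_pow]
      calc Ps ^ (N + 1) * (1 + X) ^ (4 * i) * Qs ^ (2 * i)
          = Ps ^ (N + 1) * (1 + X) ^ (4 * i) * Qs ^ (2 * i) * (Ps * (1 + X)) ^ (2 * i) := by
            rw [h1, mul_one]
        _ = Ps ^ (N + 1) * (1 + X) ^ (6 * i) * (Ps * Qs) ^ (2 * i) := by
            rw [mul_pow, mul_pow, show 6 * i = 4 * i + 2 * i by ring, pow_add]; ring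
        _ = (Ps * (1 + X)) ^ (N + 1) * (1 + X) ^ e * (Ps * Qs) ^ m * Qs * (Ps * (1 + X)) := by
            rw [he, hm, mul_pow Ps (1 + X)]; ring
        _ = _ := by rw [Ps_mul, one_pow]; ring
    rw [hG]
    have := ((p_good.pow e).mul (PQ_good.pow m)).mul_pos Qs_pos (i - 1)
    constructor
    · intro _; omega
    · intro _; exact this.ne'
  · have hG : Ps ^ (N + 1) * (1 + X) ^ (4 * i) * Qs ^ (2 * i) = (Ps * Qs) ^ (2 * i) := by
      rw [h]
      calc Ps ^ (6 * i) * (1 + X) ^ (4 * i) * Qs ^ (2 * i)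
          = (Ps * (1 + X)) ^ (4 * i) * (Ps * Qs) ^ (2 * i) := by
            rw [mul_pow, mul_pow, show 6 * i = 4 * i + 2 * i by ring, pow_add]; ring
        _ = _ := by rw [Ps_mul, one_pow, one_mul]
    rw [hG]
    by_cases he : Even i
    · have hodd : Odd (i - 1) := by
        obtain ⟨r, rfl⟩ := he
        exact ⟨r - 1, by omega⟩
      have h2 : evalNegHom ((Ps * Qs) ^ (2 * i)) = (Ps * Qs) ^ (2 * i) := by
        rw [map_pow, map_mul, evalNeg_Ps, evalNeg_Qs, mul_comm Qs]
      have h3 := coeff_evalNeg ((Ps * Qs) ^ (2 * i)) (i - 1)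
      rw [h2, hodd.neg_one_pow] at h3
      have : coeff (i - 1) ((Ps * Qs) ^ (2 * i)) = 0 := by linarith
      simp [this, h, he]
    · have hodd : ∃ r, i = 2 * r + 1 := by
        obtain ⟨r, hr⟩ := Nat.not_even_iff_odd.mp he
        exact ⟨r, hr⟩
      obtain ⟨r, hr⟩ := hodd
      have : 0 < coeff (i - 1) ((Ps * Qs) ^ (2 * i)) := by
        have h4 : ∀ k, coeff k (Ps * Qs) = if Even k then 1 else 0 := by
          intro k
          rw [coeff_mul, Finset.Nat.sum_antidiagonal_eq_sum_range_succ_mk]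
          simp only [Ps, Qs, coeff_mk, mul_one]
          rw [neg_one_geom_sum]
          by_cases hk : Even k
          · simp [hk, Nat.even_add_one]
          · simp [hk, Nat.even_add_one]
        rw [show 2 * i = (2 * i - 1) + 1 by omega, pow_succ, coeff_mul]
        refine Finset.sum_pos' (fun p _ => mul_nonneg ((PQ_good.pow _).1 _) (PQ_good.1 _))
          ⟨(0, i - 1), by simp, ?_⟩
        refine _root_.mul_pos (PQ_good.pow _).2 ?_
        rw [h4]; simp [hr]
      simp [this.ne', he]
  · obtain ⟨e, he⟩ : ∃ e, N + 1 = 6 * i + (e + 1) := ⟨N + 1 - 6 * i - 1, by omega⟩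
    have hG : Ps ^ (N + 1) * (1 + X) ^ (4 * i) * Qs ^ (2 * i)
        = Ps ^ e * (Ps * Qs) ^ (2 * i) * Ps := by
      rw [he]
      calc Ps ^ (6 * i + (e + 1)) * (1 + X) ^ (4 * i) * Qs ^ (2 * i)
          = (Ps * (1 + X)) ^ (4 * i) * (Ps ^ e * (Ps * Qs) ^ (2 * i) * Ps) := by
            rw [mul_pow, mul_pow, show 6 * i + (e + 1) = 4 * i + 2 * i + (e + 1) by ring,
              pow_add, pow_add]; ring
        _ = _ := by rw [Ps_mul, one_pow, one_mul]
    rw [hG]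
    have h3 := coeff_evalNeg (Ps ^ e * (Ps * Qs) ^ (2 * i) * Ps) (i - 1)
    have h5 : evalNegHom (Ps ^ e * (Ps * Qs) ^ (2 * i) * Ps)
        = (Qs ^ e * (Ps * Qs) ^ (2 * i)) * Qs := by
      simp only [map_mul, map_pow, evalNeg_Ps, evalNeg_Qs]
      rw [mul_comm Qs Ps]
    have := ((Qs_good.pow e).mul (PQ_good.pow (2 * i))).mul_pos Qs_pos (i - 1)
    rw [← h5, h3] at this
    constructor
    · intro _; omega
    · intro _ h0
      rw [h0] at this; simp at this

lemma deriv_Ps : derivative ℝ Ps = - Ps ^ 2 := by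
  have h := congrArg (derivative ℝ) Ps_mul
  rw [Derivation.leibniz] at h
  simp at h
  have h2 : derivative ℝ Ps = - Ps ^ 2 := by
    have : derivative ℝ Ps * (Ps * (1 + X)) = - Ps ^ 2 := by linear_combination Ps * h
    rwa [Ps_mul, mul_one] at this
  exact h2
lemma deriv_Ps_pow (N : ℕ) : derivative ℝ (Ps ^ N) = - (N : PowerSeries ℝ) * Ps ^ (N + 1) := by
  rw [Derivation.leibniz_pow]
  rw [deriv_Ps]
  rcases N with _ | N
  · simp
  · simp; ring

/-- The coefficient of `X f_prime`. -/
lemma coeff_X_deriv (f : PowerSeries ℝ) (m : ℕ) :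
    coeff m (X * derivative ℝ f) = m * coeff m f := by
  rcases m with _ | m
  · simp
  · rw [coeff_succ_X_mul]
    rw [PowerSeries.coeff_derivative]
    push_cast; ring

/-- Orthogonality: with `φ ψ = X`. -/
lemma lagrange_orth (φ ψ : PowerSeries ℝ) (h : φ * ψ = X)
    (h0 : constantCoeff φ = 0) (i j : ℕ) (hi : 1 ≤ i) :
    coeff (i - 1) (derivative ℝ (φ ^ j) * ψ ^ i) = if j = i then (i : ℝ) else 0 := by
  rcases Nat.eq_zero_or_pos j with rfl | hj
  · rw [if_neg (by omega)]; simp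
  have hder : derivative ℝ φ * ψ + φ * derivative ℝ ψ = 1 := by
    have := congrArg (derivative ℝ) h
    rw [Derivation.leibniz] at this
    simp at this
    linear_combination this
  rcases lt_or_ge j i with hlt | hge
  · rw [if_neg (by omega)]
    obtain ⟨m, rfl⟩ : ∃ m, i = j + (m + 1) := ⟨i - j - 1, by omega⟩
    obtain ⟨k, rfl⟩ : ∃ k, j = k + 1 := ⟨j - 1, by omega⟩
    have e : ((m + 1 : ℕ) : PowerSeries ℝ) * (derivative ℝ (φ ^ (k + 1)) * ψ ^ (k + 1 + (m + 1)))
        = X ^ k * (((k + 1 : ℕ) : PowerSeries ℝ) *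
          (((m + 1 : ℕ) : PowerSeries ℝ) * ψ ^ (m + 1) - X * derivative ℝ (ψ ^ (m + 1)))) := by
      rw [Derivation.leibniz_pow, Derivation.leibniz_pow, ← h, mul_pow]
      simp
      linear_combination ((m : PowerSeries ℝ) + 1) * (k + 1) * φ ^ k * ψ ^ (k + m + 1) * hder
    have h2 := congrArg (coeff (k + 1 + (m + 1) - 1)) e
    rw [show k + 1 + (m + 1) - 1 = (m + 1) + k by omega, coeff_X_pow_mul,
      ← map_natCast (C : ℝ →+* PowerSeries ℝ), ← map_natCast (C : ℝ →+* PowerSeries ℝ),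
      coeff_C_mul, coeff_C_mul, map_sub, coeff_C_mul, coeff_X_deriv, sub_self, mul_zero] at h2
    have h3 : ((m + 1 : ℕ) : ℝ) ≠ 0 := by positivity
    rw [show k + 1 + (m + 1) - 1 = (m + 1) + k by omega]
    exact (mul_eq_zero.mp h2).resolve_left h3
  · obtain ⟨m, rfl⟩ : ∃ m, j = i + m := ⟨j - i, by omega⟩
    obtain ⟨k, rfl⟩ : ∃ k, i = k + 1 := ⟨i - 1, by omega⟩
    have e : derivative ℝ (φ ^ (k + 1 + m)) * ψ ^ (k + 1)
        = X ^ k * (((k + 1 + m : ℕ) : PowerSeries ℝ) *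
          (φ ^ m * (1 - φ * derivative ℝ ψ))) := by
      rw [Derivation.leibniz_pow, ← h, mul_pow, ← hder]
      have : k + 1 + m - 1 = k + m := by omega
      rw [this]
      simp
      ring
    rw [e, ← map_natCast (C : ℝ →+* PowerSeries ℝ)]
    rw [show k + 1 - 1 = 0 + k by omega, coeff_X_pow_mul, coeff_C_mul]
    rcases Nat.eq_zero_or_pos m with rfl | hm
    · simp [h0]
    · rw [if_neg (by omega)]
      simp [h0, hm.ne']

lemma coeff_lagrange (N i K : ℕ) (hi : 1 ≤ i) (hK : 4 * K ≤ N) (a : ℕ → ℝ) (R : PowerSeries ℝ)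
    (ha : ∀ j, K < j → a j = 0)
    (h : 1 + X ^ (i + 1) * R = ∑ j ∈ Finset.range (K + 1),
      C (a j) * ((1 + X) ^ (N - 4 * j) * X ^ j * (1 - X) ^ (2 * j))) :
    (i : ℝ) * a i
      = - (N : ℝ) * coeff (i - 1) (Ps ^ (N + 1) * (1 + X) ^ (4 * i) * Qs ^ (2 * i)) := by
  set φ : PowerSeries ℝ := X * (1 - X) ^ 2 * Ps ^ 4 with hφ
  set ψ : PowerSeries ℝ := (1 + X) ^ 4 * Qs ^ 2 with hψ
  have hφψ : φ * ψ = X := by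
    calc φ * ψ = X * (Qs * (1 - X)) ^ 2 * (Ps * (1 + X)) ^ 4 := by rw [hφ, hψ]; ring
      _ = X := by rw [Qs_mul, Ps_mul]; simp
  have hφ0 : constantCoeff φ = 0 := by simp [hφ]
  have h1 : Ps ^ N + X ^ (i + 1) * (R * Ps ^ N)
      = ∑ j ∈ Finset.range (K + 1), C (a j) * φ ^ j := by
    calc Ps ^ N + X ^ (i + 1) * (R * Ps ^ N) = (1 + X ^ (i + 1) * R) * Ps ^ N := by ring
      _ = _ := by
        rw [h, Finset.sum_mul]
        refine Finset.sum_congr rfl fun j hj => ?_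
        have hj' : j ≤ K := by simpa [Nat.lt_succ_iff] using hj
        obtain ⟨e, he⟩ : ∃ e, N = e + 4 * j := ⟨N - 4 * j, by omega⟩
        rw [show N - 4 * j = e by omega, he]
        calc C (a j) * ((1 + X) ^ e * X ^ j * (1 - X) ^ (2 * j)) * Ps ^ (e + 4 * j)
            = C (a j) * (X ^ j * (1 - X) ^ (2 * j) * Ps ^ (4 * j)) * (Ps * (1 + X)) ^ e := by
              rw [mul_pow Ps, pow_add]; ring
          _ = _ := by
              rw [Ps_mul, one_pow, mul_one, hφ, mul_pow, mul_pow, ← pow_mul, ← pow_mul]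
  have h2 := congrArg (fun f => coeff (i - 1) (derivative ℝ f * ψ ^ i)) h1
  simp only [map_add, map_sum, Finset.sum_mul, deriv_Ps_pow] at h2
  have h3 : ∀ j, coeff (i - 1) (derivative ℝ (C (a j) * φ ^ j) * ψ ^ i)
      = if j = i then a j * i else 0 := by
    intro j
    rw [Derivation.leibniz]
    have : derivative ℝ (C (a j)) = 0 := by simp
    rw [this, smul_zero, add_zero, smul_eq_mul, mul_assoc, coeff_C_mul,
      lagrange_orth φ ψ hφψ hφ0 i j hi]
    split_ifs <;> simp
  simp only [h3] at h2
  rw [Finset.sum_ite_eq'] at h2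
  have h4 : coeff (i - 1) (derivative ℝ (X ^ (i + 1) * (R * Ps ^ N)) * ψ ^ i) = 0 := by
    have : derivative ℝ (X ^ (i + 1) * (R * Ps ^ N)) * ψ ^ i
        = X ^ i * ((X * derivative ℝ (R * Ps ^ N) +
          ((i + 1 : ℕ) : PowerSeries ℝ) * (R * Ps ^ N)) * ψ ^ i) := by
      rw [Derivation.leibniz, Derivation.leibniz_pow]
      simp
      ring
    rw [this, coeff_X_pow_mul', if_neg (by omega)]
  rw [add_mul, map_add, h4, add_zero] at h2
  have h5 : -(N : PowerSeries ℝ) * Ps ^ (N + 1) * ψ ^ i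
      = C (-(N : ℝ)) * (Ps ^ (N + 1) * (1 + X) ^ (4 * i) * Qs ^ (2 * i)) := by
    rw [map_neg, map_natCast, hψ, mul_pow, ← pow_mul, ← pow_mul]; ring
  rw [h5, coeff_C_mul] at h2
  rw [h2]
  split_ifs with hh
  · ring
  · rw [ha i (by simpa using hh)]; simp
end ps

/-! ### Weights -/

lemma wt_eq_sum {n : ℕ} (x : Fin n → ZMod 2) : wt x = ∑ i, (x i).val := by
  unfold wt hammingNorm
  rw [Finset.card_filter]
  refine Finset.sum_congr rfl fun i _ => ?_
  have h : ∀ a : ZMod 2, (if a ≠ 0 then 1 else 0) = a.val := by decide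
  rw [← h]

lemma wt_cast {n : ℕ} (x : Fin n → ZMod 2) : ((wt x : ℕ) : ZMod 2) = ∑ i, x i := by
  rw [wt_eq_sum]; push_cast; simp

lemma wt_add {n : ℕ} (x y : Fin n → ZMod 2) :
    wt (x + y) + 2 * ∑ i, (x i * y i).val = wt x + wt y := by
  simp only [wt_eq_sum, Finset.mul_sum, ← Finset.sum_add_distrib]
  refine Finset.sum_congr rfl fun i _ => ?_
  rw [Pi.add_apply]
  generalize x i = a
  generalize y i = b
  revert a b; decide

lemma wt_compl {n : ℕ} (x : Fin n → ZMod 2) : wt (x + 1) + wt x = n := by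
  simp only [wt_eq_sum, ← Finset.sum_add_distrib]
  have : ∀ i ∈ (Finset.univ : Finset (Fin n)), ((x + 1) i).val + (x i).val = 1 := by
    intro i _
    rw [Pi.add_apply, Pi.one_apply]
    generalize x i = a
    revert a; decide
  rw [Finset.sum_congr rfl this]; simp

lemma wt_le {n : ℕ} (x : Fin n → ZMod 2) : wt x ≤ n := by
  have := wt_compl x; omega

lemma inter_cast {n : ℕ} (x y : Fin n → ZMod 2) :
    ((∑ i, (x i * y i).val : ℕ) : ZMod 2) = ∑ i, x i * y i := by
  push_cast; simp

/-- Half of the weight modulo two. -/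
def halfWt {n : ℕ} (x : Fin n → ZMod 2) : ZMod 2 := ((wt x / 2 : ℕ) : ZMod 2)

section code
variable {n : ℕ} {C : Submodule (ZMod 2) (Fin n → ZMod 2)}

lemma mem_iff_dual (hC : IsSelfDual C) (x : Fin n → ZMod 2) :
    x ∈ C ↔ ∀ y ∈ C, ∑ i, x i * y i = 0 := by
  exact Set.ext_iff.1 (show (C : Set (Fin n → ZMod 2)) = dualSet (C : Set (Fin n → ZMod 2)) from hC) x

lemma sq_zmod2 (a : ZMod 2) : a * a = a := by revert a; decide

lemma even_wt (hC : IsSelfDual C) {x : Fin n → ZMod 2} (hx : x ∈ C) : 2 ∣ wt x := by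
  rw [← ZMod.natCast_eq_zero_iff, wt_cast]
  have := (mem_iff_dual hC x).1 hx x hx
  simpa [sq_zmod2] using this

lemma one_mem (hC : IsSelfDual C) : (1 : Fin n → ZMod 2) ∈ C := by
  rw [mem_iff_dual hC]
  intro y hy
  have := even_wt hC hy
  rw [← ZMod.natCast_eq_zero_iff, wt_cast] at this
  simpa using this

lemma even_n (hC : IsSelfDual C) : 2 ∣ n := by
  have h := even_wt hC (one_mem hC)
  have h1 := wt_compl (n := n) 0
  have h2 : wt (0 : Fin n → ZMod 2) = 0 := by simp [wt_eq_sum]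
  rw [zero_add, h2] at h1
  omega

lemma halfWt_add (hC : IsSelfDual C) {x y : Fin n → ZMod 2} (hx : x ∈ C) (hy : y ∈ C) :
    halfWt (x + y) = halfWt x + halfWt y := by
  have h1 := wt_add x y
  have h2 := inter_cast x y
  rw [(mem_iff_dual hC x).1 hx y hy, ZMod.natCast_eq_zero_iff] at h2
  have h3 := even_wt hC hx
  have h4 := even_wt hC hy
  unfold halfWt
  rw [← Nat.cast_add, ZMod.natCast_eq_natCast_iff]
  unfold Nat.ModEq
  omega

lemma halfWt_eq_zero_iff (hC : IsSelfDual C) {x : Fin n → ZMod 2} (hx : x ∈ C) :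
    halfWt x = 0 ↔ 4 ∣ wt x := by
  unfold halfWt
  rw [ZMod.natCast_eq_zero_iff]
  have h3 := even_wt hC hx
  omega

lemma zmod2_ne_zero {a : ZMod 2} (h : a ≠ 0) : a = 1 := by revert a; decide

lemma mem_shadow_iff (hse : IsSinglyEvenSelfDual C) (v : Fin n → ZMod 2) :
    v ∈ shadow C ↔ ∀ u ∈ C, ∑ i, v i * u i = halfWt u := by
  obtain ⟨hC, x, hx, hx4⟩ := hse
  constructor
  · rintro ⟨h1, h2⟩ u hu
    by_cases h4 : 4 ∣ wt u
    · rw [(halfWt_eq_zero_iff hC hu).2 h4]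
      exact h1 u ⟨hu, h4⟩
    · have hu1 := zmod2_ne_zero (mt (halfWt_eq_zero_iff hC hu).1 h4)
      rw [SetLike.mem_coe, mem_iff_dual hC] at h2
      push Not at h2
      obtain ⟨y, hy, hy0⟩ := h2
      have hy4 : ¬ 4 ∣ wt y := fun h => hy0 (h1 y ⟨hy, h⟩)
      have hy1 := zmod2_ne_zero (mt (halfWt_eq_zero_iff hC hy).1 hy4)
      have h5 : 4 ∣ wt (u + y) := by
        rw [← halfWt_eq_zero_iff hC (C.add_mem hu hy), halfWt_add hC hu hy, hu1, hy1]; decide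
      have h6 := h1 (u + y) ⟨C.add_mem hu hy, h5⟩
      simp only [Pi.add_apply, mul_add, Finset.sum_add_distrib] at h6
      rw [zmod2_ne_zero hy0] at h6
      rw [hu1]
      generalize ∑ i, v i * u i = a at h6 ⊢
      revert a; decide
  · intro h
    refine ⟨fun u hu => ?_, fun hv => ?_⟩
    · rw [h u hu.1]; exact (halfWt_eq_zero_iff hC hu.1).2 hu.2
    · have := (mem_iff_dual hC v).1 hv x hx
      rw [h x hx, halfWt_eq_zero_iff hC hx] at this
      exact hx4 this

lemma shadow_compl (hse : IsSinglyEvenSelfDual C) {v : Fin n → ZMod 2} (hv : v ∈ shadow C) :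
    v + 1 ∈ shadow C := by
  rw [mem_shadow_iff hse] at hv ⊢
  intro u hu
  have := even_wt hse.1 hu
  rw [← ZMod.natCast_eq_zero_iff, wt_cast] at this
  simp only [Pi.add_apply, Pi.one_apply, add_mul, one_mul, Finset.sum_add_distrib, this, add_zero]
  exact hv u hu

lemma shadow_mod_four (hse : IsSinglyEvenSelfDual C) {v w : Fin n → ZMod 2}
    (hv : v ∈ shadow C) (hw : w ∈ shadow C) : wt v % 4 = wt w % 4 := by
  have hC := hse.1
  have hv' := (mem_shadow_iff hse v).1 hv
  have hw' := (mem_shadow_iff hse w).1 hw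
  have hvw : v + w ∈ C := by
    rw [mem_iff_dual hC]
    intro u hu
    simp only [Pi.add_apply, add_mul, Finset.sum_add_distrib]
    rw [hv' u hu, hw' u hu]
    generalize halfWt u = a
    revert a; decide
  have h0 : v + (v + w) = w := by
    ext i
    simp only [Pi.add_apply]
    generalize v i = a
    generalize w i = b
    revert a b; decide
  have h1 := wt_add v (v + w)
  have h2 := inter_cast v (v + w)
  rw [hv' _ hvw] at h2
  unfold halfWt at h2
  rw [ZMod.natCast_eq_natCast_iff] at h2
  unfold Nat.ModEq at h2
  rw [h0] at h1
  have h3 := even_wt hC hvw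
  omega

/-! ### MacWilliams type identity -/

/-- The sign character of `ZMod 2`. -/
def sgn (R : Type*) [CommRing R] (a : ZMod 2) : R := if a = 0 then 1 else -1

lemma sgn_add (R : Type*) [CommRing R] (a b : ZMod 2) : sgn R (a + b) = sgn R a * sgn R b := by
  unfold sgn
  by_cases ha : a = 0
  · simp [ha]
  · by_cases hb : b = 0
    · simp [hb]
    · rw [zmod2_ne_zero ha, zmod2_ne_zero hb]
      rw [if_pos (by decide), if_neg (by decide)]; simp

lemma sgn_sum (R : Type*) [CommRing R] {ι : Type*} (s : Finset ι) (f : ι → ZMod 2) :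
    sgn R (∑ i ∈ s, f i) = ∏ i ∈ s, sgn R (f i) := by
  classical
  induction s using Finset.induction_on with
  | empty => simp [sgn]
  | insert a s ha ih => rw [Finset.sum_insert ha, Finset.prod_insert ha, sgn_add, ih]

lemma sgn_natCast (R : Type*) [CommRing R] (k : ℕ) : sgn R (k : ZMod 2) = (-1) ^ k := by
  induction k with
  | zero => simp [sgn]
  | succ k ih => rw [Nat.cast_succ, sgn_add, ih, pow_succ]; simp [sgn]

lemma prod_wt {R : Type*} [CommRing R] (x y : R) (w : Fin n → ZMod 2) :
    ∏ i, (if w i = 0 then x else y) = x ^ (n - wt w) * y ^ wt w := by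
  rw [Finset.prod_ite]
  simp only [Finset.prod_const]
  have h1 : (Finset.univ.filter fun i => ¬ w i = 0).card = wt w := rfl
  have h2 := Finset.card_filter_add_card_filter_not (s := (Finset.univ : Finset (Fin n)))
    (fun i => w i = 0)
  rw [h1, Finset.card_univ, Fintype.card_fin] at h2
  rw [h1, show (Finset.univ.filter fun i => w i = 0).card = n - wt w by omega]

lemma fourierW {R : Type*} [CommRing R] (x y : R) (u : Fin n → ZMod 2) :
    ∑ w : Fin n → ZMod 2, sgn R (∑ i, w i * u i) * (x ^ (n - wt w) * y ^ wt w)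
      = (x + y) ^ (n - wt u) * (x - y) ^ wt u := by
  rw [← prod_wt (x + y) (x - y) u]
  have h : ∀ i, (if u i = 0 then x + y else x - y)
      = ∑ a : ZMod 2, sgn R (a * u i) * (if a = 0 then x else y) := by
    intro i
    rw [show (Finset.univ : Finset (ZMod 2)) = {0, 1} from rfl,
      Finset.sum_pair (by decide)]
    by_cases hu : u i = 0
    · simp [hu, sgn]
    · simp [hu, sgn]; ring
  rw [Finset.prod_congr rfl fun i _ => h i, Finset.prod_univ_sum, Fintype.piFinset_univ]
  refine Finset.sum_congr rfl fun w _ => ?_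
  rw [Finset.prod_mul_distrib, sgn_sum, prod_wt]

open Classical in
lemma char_sum (hse : IsSinglyEvenSelfDual C) (R : Type*) [Field R] [CharZero R]
    (w : Fin n → ZMod 2) :
    ∑ u : C, sgn R (halfWt (u : Fin n → ZMod 2)) * sgn R (∑ i, w i * (u : Fin n → ZMod 2) i)
      = if w ∈ shadow C then (Fintype.card C : R) else 0 := by
  have hC := hse.1
  simp only [← sgn_add]
  split_ifs with hw
  · rw [mem_shadow_iff hse] at hw
    have : ∀ u : C, sgn R (halfWt (u : Fin n → ZMod 2) + ∑ i, w i * (u : Fin n → ZMod 2) i) = 1 := by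
      intro u
      rw [hw u u.2]
      generalize halfWt (u : Fin n → ZMod 2) = a
      have : a + a = 0 := by revert a; decide
      simp [this, sgn]
    simp [this]
  · rw [mem_shadow_iff hse] at hw
    push Not at hw
    obtain ⟨y, hy, hy0⟩ := hw
    have h1 : halfWt y + ∑ i, w i * y i = 1 := by
      revert hy0
      generalize ∑ i, w i * y i = a
      generalize halfWt y = b
      revert a b; decide
    set f : C → R := fun u => sgn R (halfWt (u : Fin n → ZMod 2)
      + ∑ i, w i * (u : Fin n → ZMod 2) i) with hf
    have h2 : ∀ u : C, f (u + ⟨y, hy⟩) = - f u := by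
      intro u
      simp only [hf, Submodule.coe_add, halfWt_add hC u.2 hy, Pi.add_apply, mul_add,
        Finset.sum_add_distrib]
      rw [add_add_add_comm, h1, sgn_add]
      simp [sgn]
    have h3 : ∑ u, f (u + ⟨y, hy⟩) = ∑ u, f u :=
      Equiv.sum_comp (Equiv.addRight (⟨y, hy⟩ : C)) f
    simp only [h2, Finset.sum_neg_distrib] at h3
    change ∑ u, f u = 0
    have : (2 : R) * ∑ u, f u = 0 := by linear_combination -h3
    simpa using this

open Classical in
lemma macW (hse : IsSinglyEvenSelfDual C) (R : Type*) [Field R] [CharZero R] (x y : R) :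
    (Fintype.card C : R) * ∑ v ∈ Finset.univ.filter (· ∈ shadow C), x ^ (n - wt v) * y ^ wt v
      = ∑ u : C, (-1) ^ (wt (u : Fin n → ZMod 2) / 2) *
          ((x + y) ^ (n - wt (u : Fin n → ZMod 2)) * (x - y) ^ wt (u : Fin n → ZMod 2)) := by
  simp only [← fourierW x y, Finset.mul_sum, ← sgn_natCast R]
  rw [Finset.sum_comm, Finset.sum_filter]
  refine Finset.sum_congr rfl fun w _ => ?_
  have h := char_sum hse R w
  have h' : ∑ u : C, sgn R ((wt (u : Fin n → ZMod 2) / 2 : ℕ) : ZMod 2) *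
      (sgn R (∑ i, w i * (u : Fin n → ZMod 2) i) * (x ^ (n - wt w) * y ^ wt w))
      = (∑ u : C, sgn R (halfWt (u : Fin n → ZMod 2)) *
        sgn R (∑ i, w i * (u : Fin n → ZMod 2) i)) * (x ^ (n - wt w) * y ^ wt w) := by
    rw [Finset.sum_mul]
    refine Finset.sum_congr rfl fun u _ => ?_
    rw [halfWt, mul_assoc]
  rw [h', h]
  split_ifs <;> simp

lemma I_pow_inj {a b s t : ℕ} (hs : 0 < s) (ht : 0 < t)
    (h : (s : ℂ) * Complex.I ^ a = (t : ℂ) * Complex.I ^ b) : a % 4 = b % 4 := by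
  rw [Complex.I_pow_eq_pow_mod a, Complex.I_pow_eq_pow_mod b] at h
  have h1 := Nat.mod_lt a (show 0 < 4 by norm_num)
  have h2 := Nat.mod_lt b (show 0 < 4 by norm_num)
  have hs' : (0 : ℝ) < s := by exact_mod_cast hs
  have ht' : (0 : ℝ) < t := by exact_mod_cast ht
  generalize a % 4 = p at *
  generalize b % 4 = q at *
  have hI3 : Complex.I ^ 3 = - Complex.I := Complex.I_pow_three
  have hre := congrArg Complex.re h
  have him := congrArg Complex.im h
  interval_cases p <;> interval_cases q <;> first | rfl | (exfalso; simp [hI3] at hre him; linarith)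

lemma shadow_wt_mod (hse : IsSinglyEvenSelfDual C) {v : Fin n → ZMod 2} (hv : v ∈ shadow C) :
    wt v % 4 = (n / 2) % 4 := by
  classical
  have h := macW hse ℂ 1 Complex.I
  have hn := even_n hse.1
  have h1 : ∀ u : C, (-1 : ℂ) ^ (wt (u : Fin n → ZMod 2) / 2) *
      ((1 + Complex.I) ^ (n - wt (u : Fin n → ZMod 2)) *
        (1 - Complex.I) ^ wt (u : Fin n → ZMod 2)) = 2 ^ (n / 2) * Complex.I ^ (n / 2) := by
    intro u
    obtain ⟨k, hk⟩ := even_wt hse.1 u.2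
    obtain ⟨N, hN⟩ := hn
    have hle := wt_le (u : Fin n → ZMod 2)
    obtain ⟨e, he⟩ : ∃ e, N = e + k := ⟨N - k, by omega⟩
    have e1 : (1 + Complex.I) ^ 2 = 2 * Complex.I := by
      linear_combination Complex.I_sq
    have e2 : (1 - Complex.I) ^ 2 = - (2 * Complex.I) := by
      linear_combination Complex.I_sq
    rw [show n - wt (u : Fin n → ZMod 2) = 2 * e by omega, hk, show 2 * k / 2 = k by omega,
      show n / 2 = e + k by omega, pow_mul, pow_mul, e1, e2, ← mul_pow, pow_add]
    have hneg : (-(2 * Complex.I)) ^ k = (-1) ^ k * (2 * Complex.I) ^ k := neg_pow _ _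
    rw [hneg]
    have : (-1 : ℂ) ^ k * (-1) ^ k = 1 := by rw [← mul_pow]; simp
    generalize 2 * Complex.I = z at *
    generalize (-1 : ℂ) ^ k = m at this
    linear_combination z ^ e * z ^ k * this
  rw [Finset.sum_congr rfl fun u _ => h1 u] at h
  have h2 : ∀ w ∈ Finset.univ.filter (· ∈ shadow C),
      (1 : ℂ) ^ (n - wt w) * Complex.I ^ wt w = Complex.I ^ wt v := by
    intro w hw
    rw [one_pow, one_mul, Complex.I_pow_eq_pow_mod (wt w), Complex.I_pow_eq_pow_mod (wt v),
      shadow_mod_four hse (by simpa using hw) hv]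
  rw [Finset.sum_congr rfl h2] at h
  simp only [Finset.sum_const, nsmul_eq_mul, Finset.card_univ] at h
  have hc : (Fintype.card C : ℂ) ≠ 0 := by
    exact_mod_cast Fintype.card_ne_zero
  have h3 := mul_left_cancel₀ hc h
  refine I_pow_inj (s := (Finset.univ.filter (· ∈ shadow C)).card) (t := 2 ^ (n / 2))
    (Finset.card_pos.2 ⟨v, by simpa using hv⟩) (by positivity) ?_
  push_cast
  exact h3

end code

/-! ### Chebyshev-type polynomials -/

open Polynomial in
/-- Polynomials with `chebP l (z + 1/z - 2) = z^l + z^(-l)`. -/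
noncomputable def chebP : ℕ → Polynomial ℝ
  | 0 => 2
  | 1 => X + 2
  | (l + 2) => (X + 2) * chebP (l + 1) - chebP l

lemma chebP_eval (z : ℝ) (hz : z ≠ 0) (l : ℕ) :
    (chebP l).eval (z + z⁻¹ - 2) = z ^ l + z⁻¹ ^ l := by
  induction l using Nat.twoStepInduction with
  | zero => simp [chebP]; norm_num
  | one => simp [chebP]
  | more l h1 h2 =>
    simp only [chebP, Polynomial.eval_sub, Polynomial.eval_mul, Polynomial.eval_add,
      Polynomial.eval_X, Polynomial.eval_ofNat, h1, h2]
    have : z * z⁻¹ = 1 := mul_inv_cancel₀ hz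
    generalize z⁻¹ = y at *
    linear_combination (z ^ l + y ^ l) * this

lemma chebP_aux (l : ℕ) :
    (∀ j, 0 ≤ (chebP (l + 1)).coeff j - (chebP l).coeff j) ∧
    (0 < (chebP (l + 1)).coeff (l + 1) - (chebP l).coeff (l + 1)) ∧
    (∀ j, 0 ≤ (chebP l).coeff j) ∧ (∀ j, j ≤ l → 0 < (chebP l).coeff j) ∧
    (∀ j, l < j → (chebP l).coeff j = 0) ∧ (∀ j, l + 1 < j → (chebP (l + 1)).coeff j = 0) := by
  have c2 : ∀ j, (2 : Polynomial ℝ).coeff j = if j = 0 then 2 else 0 := by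
    intro j
    rw [show (2 : Polynomial ℝ) = Polynomial.C 2 from rfl, Polynomial.coeff_C]
  induction l with
  | zero =>
    have d : ∀ j, (chebP (0 + 1)).coeff j - (chebP 0).coeff j = if 1 = j then 1 else 0 := by
      intro j
      simp [chebP, Polynomial.coeff_X]
    refine ⟨fun j => ?_, ?_, fun j => ?_, fun j hj => ?_, fun j hj => ?_, fun j hj => ?_⟩
    · rw [d]; split_ifs <;> norm_num
    · rw [d]; simp
    · simp only [chebP, c2]; split_ifs <;> norm_num
    · simp only [chebP, c2]; rw [if_pos (by omega)]; norm_num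
    · simp only [chebP, c2]; rw [if_neg (by omega)]
    · simp only [chebP, c2, Polynomial.coeff_add, Polynomial.coeff_X]
      rw [if_neg (by omega), if_neg (by omega)]; norm_num
  | succ l ih =>
    obtain ⟨h1, h2, h3, h4, h5, h6⟩ := ih
    have rec0 : (chebP (l + 1 + 1)).coeff 0 - (chebP (l + 1)).coeff 0
        = (chebP (l + 1)).coeff 0 - (chebP l).coeff 0 := by
      simp [chebP, add_mul, Polynomial.mul_coeff_zero]; ring
    have recS : ∀ j, (chebP (l + 1 + 1)).coeff (j + 1) - (chebP (l + 1)).coeff (j + 1)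
        = (chebP (l + 1)).coeff (j + 1) - (chebP l).coeff (j + 1) + (chebP (l + 1)).coeff j := by
      intro j
      have : chebP (l + 1 + 1) = Polynomial.X * chebP (l + 1)
          + Polynomial.C 2 * chebP (l + 1) - chebP l := by
        rw [show Polynomial.C (2 : ℝ) = 2 from rfl]
        simp only [chebP]; ring
      rw [this, Polynomial.coeff_sub, Polynomial.coeff_add, Polynomial.coeff_C_mul,
        Polynomial.coeff_X_mul]
      ring
    have h3' : ∀ j, 0 ≤ (chebP (l + 1)).coeff j := fun j => by linarith [h1 j, h3 j]
    have h4' : ∀ j, j ≤ l + 1 → 0 < (chebP (l + 1)).coeff j := by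
      intro j hj
      rcases Nat.lt_or_ge l j with h | h
      · obtain rfl : j = l + 1 := by omega
        linarith [h3 (l + 1)]
      · linarith [h1 j, h4 j h]
    refine ⟨fun j => ?_, ?_, h3', h4', h6, fun j hj => ?_⟩
    · rcases j with _ | j
      · rw [rec0]; exact h1 0
      · rw [recS]; linarith [h1 (j + 1), h3' j]
    · rw [recS]; linarith [h1 (l + 1 + 1), h4' (l + 1) le_rfl]
    · obtain ⟨k, rfl⟩ : ∃ k, j = k + 1 := ⟨j - 1, by omega⟩
      have := recS k
      rw [h6 (k + 1) (by omega), h5 (k + 1) (by omega), h6 k (by omega)] at this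
      linarith

lemma chebP_nonneg (l j : ℕ) : 0 ≤ (chebP l).coeff j := (chebP_aux l).2.2.1 j
lemma chebP_pos {l j : ℕ} (h : j ≤ l) : 0 < (chebP l).coeff j := (chebP_aux l).2.2.2.1 j h
lemma chebP_zero {l j : ℕ} (h : l < j) : (chebP l).coeff j = 0 := (chebP_aux l).2.2.2.2.1 j h

lemma chebP_eval_sum {l K : ℕ} (h : l ≤ K) (q : ℝ) :
    (chebP l).eval q = ∑ j ∈ Finset.range (K + 1), (chebP l).coeff j * q ^ j := by
  refine Polynomial.eval_eq_sum_range' ?_ q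
  refine Nat.lt_succ_of_le (Polynomial.natDegree_le_iff_coeff_eq_zero.2 fun j hj => ?_)
  exact chebP_zero (by omega)

/-- distance of a weight from `N`, divided by four -/
def lev (N w : ℕ) : ℕ := (if w ≤ N then N - w else w - N) / 4

lemma term_expand (N K w : ℕ) (hK : K = N / 4) (hw : w ≤ 2 * N) (hmod : w % 4 = N % 4)
    (s : ℝ) (h0 : 0 < s) (h1 : s < 1) :
    (1 + s) ^ (2 * N - w) * (1 - s) ^ w + (1 + s) ^ w * (1 - s) ^ (2 * N - w)
      = ∑ j ∈ Finset.range (K + 1), (chebP (lev N w)).coeff j *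
        ((-64) ^ j * ((1 + (-s ^ 2)) ^ (N - 4 * j) * (-s ^ 2) ^ j * (1 - (-s ^ 2)) ^ (2 * j))) := by
  have hx : (0 : ℝ) < 1 + s := by linarith
  have hy : (0 : ℝ) < 1 - s := by linarith
  set x := 1 + s with hxdef
  set y := 1 - s with hydef
  have hxy : x * y = 1 + (-s ^ 2) := by rw [hxdef, hydef]; ring
  set l := lev N w with hl
  have hlN : 4 * l ≤ N := by
    rw [hl]; unfold lev; split_ifs <;> omega
  have hlK : l ≤ K := by omega
  have e1 : x ^ (2 * N - w) * y ^ w + x ^ w * y ^ (2 * N - w)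
      = (x * y) ^ N * (((x / y) ^ 4) ^ l + (((x / y) ^ 4)⁻¹) ^ l) := by
    have e2 : (x * y) ^ N * (((x / y) ^ 4) ^ l + (((x / y) ^ 4)⁻¹) ^ l)
        = x ^ (N + 4 * l) * y ^ (N - 4 * l) + x ^ (N - 4 * l) * y ^ (N + 4 * l) := by
      obtain ⟨e, he⟩ : ∃ e, N = e + 4 * l := ⟨N - 4 * l, by omega⟩
      rw [show N - 4 * l = e by omega, he]
      rw [← inv_pow, inv_div, ← pow_mul, ← pow_mul, div_pow, div_pow, mul_pow]
      field_simp
      ring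
    rw [e2]
    by_cases hc : w ≤ N
    · have : 4 * l = N - w := by
        rw [hl]; unfold lev; rw [if_pos hc]; omega
      rw [this, show N + (N - w) = 2 * N - w by omega, show N - (N - w) = w by omega]
    · have : 4 * l = w - N := by
        rw [hl]; unfold lev; rw [if_neg hc]; omega
      rw [this, show N + (w - N) = w by omega, show N - (w - N) = 2 * N - w by omega]
      ring
  have hz : (x / y) ^ 4 ≠ 0 := by positivity
  rw [e1, ← chebP_eval _ hz, chebP_eval_sum hlK, Finset.mul_sum]
  refine Finset.sum_congr rfl fun j hj => ?_
  have hjK : j ≤ K := by simpa [Nat.lt_succ_iff] using hj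
  obtain ⟨e, he⟩ : ∃ e, N = e + 4 * j := ⟨N - 4 * j, by omega⟩
  have hq : (x * y) ^ 4 * ((x / y) ^ 4 + ((x / y) ^ 4)⁻¹ - 2)
      = (-64) * (-s ^ 2) * (1 - (-s ^ 2)) ^ 2 := by
    have : (x * y) ^ 4 * ((x / y) ^ 4 + ((x / y) ^ 4)⁻¹ - 2) = (x ^ 4 - y ^ 4) ^ 2 := by
      rw [← inv_pow, inv_div, div_pow, div_pow]
      field_simp
      ring
    rw [this, hxdef, hydef]; ring
  rw [show N - 4 * j = e by omega, he, ← hxy]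
  generalize (x / y) ^ 4 + ((x / y) ^ 4)⁻¹ - 2 = q at *
  calc (x * y) ^ (e + 4 * j) * ((chebP l).coeff j * q ^ j)
      = (chebP l).coeff j * ((x * y) ^ e * ((x * y) ^ 4 * q) ^ j) := by
        rw [mul_pow ((x * y) ^ 4) q, ← pow_mul, pow_add]; ring
    _ = _ := by
        rw [hq, mul_pow (-64 * -s ^ 2), mul_pow (-64 : ℝ) (-s ^ 2), ← pow_mul]
        generalize (-s ^ 2) ^ j = p1
        ring

section main
variable {n : ℕ} {C : Submodule (ZMod 2) (Fin n → ZMod 2)}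

open Classical in
/-- unnormalised Gleason coefficients -/
noncomputable def betaC (C : Submodule (ZMod 2) (Fin n → ZMod 2)) (j : ℕ) : ℝ :=
  ∑ v ∈ Finset.univ.filter (· ∈ shadow C), (chebP (lev (n / 2) (wt v))).coeff j

lemma lev_le (N w : ℕ) (hw : w ≤ 2 * N) : lev N w ≤ N / 4 := by
  unfold lev; split_ifs <;> omega

lemma betaC_ne_zero_iff (hse : IsSinglyEvenSelfDual C) (j : ℕ) :
    betaC C j ≠ 0 ↔ ∃ v ∈ shadow C, wt v + 4 * j ≤ n / 2 := by
  classical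
  have hn := even_n hse.1
  constructor
  · intro h
    obtain ⟨v, hv, hv0⟩ := Finset.exists_ne_zero_of_sum_ne_zero h
    have hv' : v ∈ shadow C := by simpa using hv
    have hlev : j ≤ lev (n / 2) (wt v) := by
      by_contra hc
      exact hv0 (chebP_zero (by omega))
    unfold lev at hlev
    have h1 := wt_compl v
    split_ifs at hlev with hc
    · exact ⟨v, hv', by omega⟩
    · exact ⟨v + 1, shadow_compl hse hv', by omega⟩
  · rintro ⟨v, hv, hvw⟩
    refine (Finset.sum_pos' (fun w _ => chebP_nonneg _ _) ⟨v, by simpa using hv, ?_⟩).ne'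
    refine chebP_pos ?_
    unfold lev
    rw [if_pos (by omega)]
    omega

/-- scaled Gleason coefficients -/
noncomputable def aC (C : Submodule (ZMod 2) (Fin n → ZMod 2)) (j : ℕ) : ℝ :=
  (Nat.card C : ℝ) / 2 ^ (n + 1) * (-64) ^ j * betaC C j

open Classical in
lemma gleason_eval (hse : IsSinglyEvenSelfDual C) (s : ℝ) (h0 : 0 < s) (h1 : s < 1) :
    ∑ u : C, (-s ^ 2) ^ (wt (u : Fin n → ZMod 2) / 2)
      = ∑ j ∈ Finset.range (n / 2 / 4 + 1), aC C j *
        ((1 + (-s ^ 2)) ^ (n / 2 - 4 * j) * (-s ^ 2) ^ j * (1 - (-s ^ 2)) ^ (2 * j)) := by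
  classical
  have hn := even_n hse.1
  have h11 : ∀ v : Fin n → ZMod 2, v + 1 + 1 = v := by
    intro v
    ext i
    simp only [Pi.add_apply, Pi.one_apply]
    generalize v i = a
    revert a; decide
  have hm := macW hse ℝ (1 + s) (1 - s)
  have hS : ∑ v ∈ Finset.univ.filter (· ∈ shadow C), (1 + s) ^ (n - wt v) * (1 - s) ^ wt v
      = ∑ v ∈ Finset.univ.filter (· ∈ shadow C), (1 + s) ^ wt v * (1 - s) ^ (n - wt v) := by
    refine Finset.sum_nbij' (fun v => v + 1) (fun v => v + 1) ?_ ?_ ?_ ?_ ?_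
    · intro v hv; simpa using shadow_compl hse (by simpa using hv)
    · intro v hv; simpa using shadow_compl hse (by simpa using hv)
    · intro v _; exact h11 v
    · intro v _; exact h11 v
    · intro v _
      have := wt_compl v
      rw [show n - wt v = wt (v + 1) by omega, show n - wt (v + 1) = wt v by omega]
  have hT : ∑ v ∈ Finset.univ.filter (· ∈ shadow C), (1 + s) ^ (n - wt v) * (1 - s) ^ wt v
      = 1 / 2 * ∑ j ∈ Finset.range (n / 2 / 4 + 1), betaC C j *
        ((-64) ^ j * ((1 + (-s ^ 2)) ^ (n / 2 - 4 * j) * (-s ^ 2) ^ j *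
          (1 - (-s ^ 2)) ^ (2 * j))) := by
    have : ∑ v ∈ Finset.univ.filter (· ∈ shadow C), ((1 + s) ^ (n - wt v) * (1 - s) ^ wt v +
          (1 + s) ^ wt v * (1 - s) ^ (n - wt v))
        = ∑ j ∈ Finset.range (n / 2 / 4 + 1), betaC C j *
        ((-64) ^ j * ((1 + (-s ^ 2)) ^ (n / 2 - 4 * j) * (-s ^ 2) ^ j *
          (1 - (-s ^ 2)) ^ (2 * j))) := by
      simp only [betaC, Finset.sum_mul]
      rw [Finset.sum_comm]
      refine Finset.sum_congr rfl fun v hv => ?_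
      have h2 : n = 2 * (n / 2) := by omega
      have := term_expand (n / 2) (n / 2 / 4) (wt v) rfl (h2 ▸ wt_le v)
        (shadow_wt_mod hse (by simpa using hv)) s h0 h1
      rw [← h2] at this
      exact this
    rw [Finset.sum_add_distrib, ← hS] at this
    linarith
  rw [hT] at hm
  have hU : ∀ u : C, (-1 : ℝ) ^ (wt (u : Fin n → ZMod 2) / 2) *
      ((1 + s + (1 - s)) ^ (n - wt (u : Fin n → ZMod 2)) *
        (1 + s - (1 - s)) ^ wt (u : Fin n → ZMod 2))
      = 2 ^ n * (-s ^ 2) ^ (wt (u : Fin n → ZMod 2) / 2) := by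
    intro u
    obtain ⟨k, hk⟩ := even_wt hse.1 u.2
    have hle := wt_le (u : Fin n → ZMod 2)
    obtain ⟨e, he⟩ : ∃ e, n = e + 2 * k := ⟨n - 2 * k, by omega⟩
    rw [hk, show n - 2 * k = e by omega, show 2 * k / 2 = k by omega, he,
      show 1 + s + (1 - s) = 2 by ring, show 1 + s - (1 - s) = 2 * s by ring,
      show -s ^ 2 = (-1) * s ^ 2 by ring, mul_pow (-1 : ℝ) (s ^ 2), ← pow_mul, mul_pow, pow_add]
    ring
  rw [Finset.sum_congr rfl fun u _ => hU u, ← Finset.mul_sum] at hm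
  have hcard : (Nat.card C : ℝ) = Fintype.card C := by rw [Nat.card_eq_fintype_card]
  have h2n : (2 : ℝ) ^ n ≠ 0 := by positivity
  have hm' : ∑ u : C, (-s ^ 2) ^ (wt (u : Fin n → ZMod 2) / 2)
      = (Nat.card C : ℝ) / 2 ^ (n + 1) * ∑ j ∈ Finset.range (n / 2 / 4 + 1), betaC C j *
        ((-64) ^ j * ((1 + (-s ^ 2)) ^ (n / 2 - 4 * j) * (-s ^ 2) ^ j *
          (1 - (-s ^ 2)) ^ (2 * j))) := by
    rw [hcard, pow_succ (2 : ℝ) n]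
    refine mul_left_cancel₀ h2n ?_
    rw [← hm]
    generalize (∑ j ∈ Finset.range (n / 2 / 4 + 1), _ : ℝ) = T
    field_simp
  rw [hm', Finset.mul_sum]
  refine Finset.sum_congr rfl fun j _ => ?_
  rw [aC]; ring

open Classical in
lemma gleason_poly (hse : IsSinglyEvenSelfDual C) :
    (∑ u : C, Polynomial.X ^ (wt (u : Fin n → ZMod 2) / 2) : Polynomial ℝ)
      = ∑ j ∈ Finset.range (n / 2 / 4 + 1), Polynomial.C (aC C j) *
        ((1 + Polynomial.X) ^ (n / 2 - 4 * j) * Polynomial.X ^ j *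
          (1 - Polynomial.X) ^ (2 * j)) := by
  refine Polynomial.eq_of_infinite_eval_eq _ _ ?_
  refine (Set.Ioo_infinite (show (-1 : ℝ) < 0 by norm_num)).mono ?_
  rintro t ⟨ht1, ht0⟩
  have hs : t = - (Real.sqrt (-t)) ^ 2 := by rw [Real.sq_sqrt (by linarith)]; ring
  have h := gleason_eval hse (Real.sqrt (-t)) (Real.sqrt_pos.2 (by linarith))
    (by rw [Real.sqrt_lt' (by norm_num)]; linarith)
  rw [← hs] at h
  simp only [Set.mem_ofPred_eq, Polynomial.eval_finsetSum, Polynomial.eval_mul,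
    Polynomial.eval_pow, Polynomial.eval_add, Polynomial.eval_sub, Polynomial.eval_X,
    Polynomial.eval_C, Polynomial.eval_one]
  exact h

lemma aC_ne_zero_iff (j : ℕ) : aC C j ≠ 0 ↔ betaC C j ≠ 0 := by
  have h1 : (Nat.card C : ℝ) ≠ 0 := by exact_mod_cast Nat.card_pos.ne'
  unfold aC
  simp [h1]

open Classical in
lemma poly_lhs (i : ℕ) (hw : ∀ u ∈ C, u ≠ 0 → 2 * i + 2 ≤ wt u) :
    ∃ R : Polynomial ℝ, (∑ u : C, Polynomial.X ^ (wt (u : Fin n → ZMod 2) / 2) : Polynomial ℝ)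
      = 1 + Polynomial.X ^ (i + 1) * R := by
  classical
  refine ⟨∑ u ∈ Finset.univ.erase (0 : C),
    Polynomial.X ^ (wt (u : Fin n → ZMod 2) / 2 - (i + 1)), ?_⟩
  rw [← Finset.add_sum_erase _ _ (Finset.mem_univ (0 : C)), Finset.mul_sum]
  congr 1
  · simp [wt_eq_sum]
  · refine Finset.sum_congr rfl fun u hu => ?_
    have hu0 : (u : Fin n → ZMod 2) ≠ 0 := by simpa using hu
    have := hw u u.2 hu0
    rw [← pow_add]
    congr 1
    omega

/-- The key equivalence. -/
lemma key_iff (hse : IsSinglyEvenSelfDual C) (hn0 : 0 < n) (i : ℕ)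
    (hw : ∀ u ∈ C, u ≠ 0 → 2 * i + 2 ≤ wt u) :
    (∃ v ∈ shadow C, wt v + 4 * i ≤ n / 2) ↔ ¬ (n / 2 + 1 = 6 * i ∧ Even i) := by
  rw [← betaC_ne_zero_iff hse, ← aC_ne_zero_iff]
  obtain ⟨R, hR⟩ := poly_lhs i hw
  rw [gleason_poly hse] at hR
  have hn := even_n hse.1
  rcases Nat.eq_zero_or_pos i with rfl | hi
  · have h := congrArg (Polynomial.eval 0) hR
    rw [Finset.sum_range_succ'] at h
    simp [Polynomial.eval_finsetSum] at h
    simp [h]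
  · rw [← coeff_G_ne_zero_iff (n / 2) i hi]
    have h2 := congrArg (Polynomial.coeToPowerSeries.ringHom : Polynomial ℝ →+* _) hR
    simp only [map_add, map_one, map_mul, map_pow, map_sum, map_sub,
      Polynomial.coeToPowerSeries.ringHom_apply, Polynomial.coe_X, Polynomial.coe_C] at h2
    have h3 := coeff_lagrange (n / 2) i (n / 2 / 4) hi (by omega) (aC C) R ?_ h2.symm
    · have hi0 : (i : ℝ) ≠ 0 := by positivity
      have hN0 : ((n / 2 : ℕ) : ℝ) ≠ 0 := by
        have : 0 < n / 2 := by omega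
        positivity
      constructor
      · intro ha hz
        rw [hz, mul_zero] at h3
        exact mul_ne_zero hi0 ha h3
      · intro hz ha
        rw [ha, mul_zero] at h3
        exact mul_ne_zero (neg_ne_zero.2 hN0) hz h3.symm
    · intro j hj
      unfold aC betaC
      rw [Finset.sum_eq_zero, mul_zero]
      intro v _
      have := lev_le (n / 2) (wt v) (by have := wt_le v; omega)
      exact chebP_zero (by omega)

end main

theorem shadow_bound (n : ℕ) (C : Submodule (ZMod 2) (Fin n → ZMod 2))
    (hse : IsSinglyEvenSelfDual C) :
    (¬ (n % 24 = 22 ∧ minWt C = 4 * (n / 24) + 6) →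
      (minWtSet (shadow C) : ℤ) ≤ ((n / 2 : ℕ) : ℤ) + 4 - 2 * (minWt C : ℤ)) ∧
    ((n % 24 = 22 ∧ minWt C = 4 * (n / 24) + 6) →
      (minWtSet (shadow C) : ℤ) = ((n / 2 : ℕ) : ℤ) + 8 - 2 * (minWt C : ℤ)) := by
  have hC := hse.1
  have hn := even_n hC
  obtain ⟨x, hx, hx4⟩ := hse.2
  have hn0 : 0 < n := by
    rcases Nat.eq_zero_or_pos n with h | h
    · exfalso
      have := wt_le x
      apply hx4
      rw [show wt x = 0 by omega]
      exact dvd_zero 4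
    · exact h
  have hx0 : x ≠ 0 := by
    rintro rfl
    apply hx4
    simp [wt_eq_sum]
  have hd_le : ∀ u ∈ C, u ≠ 0 → minWt C ≤ wt u := fun u hu hu0 =>
    Nat.sInf_le ⟨u, hu, hu0, rfl⟩
  obtain ⟨y, hy, hy0, hyd⟩ : ∃ y ∈ (C : Set (Fin n → ZMod 2)), y ≠ 0 ∧ wt y = minWt C :=
    Nat.sInf_mem (s := {w | ∃ x ∈ (C : Set (Fin n → ZMod 2)), x ≠ 0 ∧ wt x = w})
      ⟨wt x, x, hx, hx0, rfl⟩
  have hdeven : 2 ∣ minWt C := hyd ▸ even_wt hC hy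
  have hdpos : 0 < minWt C := by
    rw [← hyd]
    exact hammingNorm_pos_iff.2 hy0
  have hS0 : ∀ v ∈ shadow C, v ≠ 0 := by
    rintro v hv rfl
    exact hv.2 C.zero_mem
  have hs_le : ∀ v ∈ shadow C, minWtSet (shadow C) ≤ wt v := fun v hv =>
    Nat.sInf_le ⟨v, hv, hS0 v hv, rfl⟩
  constructor
  · intro hne
    obtain ⟨i, hi⟩ : ∃ i, minWt C = 2 * i + 2 := ⟨minWt C / 2 - 1, by omega⟩
    obtain ⟨v, hv, hvw⟩ := (key_iff hse hn0 i fun u hu hu0 => hi ▸ hd_le u hu hu0).2 (by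
      rintro ⟨h1, r, hr⟩
      apply hne
      omega)
    have := hs_le v hv
    omega
  · rintro ⟨h22, hd⟩
    obtain ⟨m, hm⟩ : ∃ m, n = 24 * m + 22 := ⟨n / 24, by omega⟩
    obtain ⟨v, hv, hvw⟩ := (key_iff hse hn0 (2 * m + 1) fun u hu hu0 => by
      have := hd_le u hu hu0
      omega).2 (by rintro ⟨h1, _⟩; omega)
    have hno := mt (key_iff hse hn0 (2 * m + 2) fun u hu hu0 => by
      have := hd_le u hu hu0
      omega).1 (not_not.2 ⟨by omega, ⟨m + 1, by ring⟩⟩)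
    obtain ⟨z, hz, hz0, hzs⟩ : ∃ z ∈ shadow C, z ≠ 0 ∧ wt z = minWtSet (shadow C) :=
      Nat.sInf_mem (s := {w | ∃ x ∈ shadow C, x ≠ 0 ∧ wt x = w})
        ⟨wt v, v, hv, hS0 v hv, rfl⟩
    have h1 := hs_le v hv
    have h2 : ¬ (wt z + 4 * (2 * m + 2) ≤ n / 2) := fun h => hno ⟨z, hz, h⟩
    have h3 := shadow_wt_mod hse hz
    omega
end

section
/- Let C be a singly even self-dual code of length n and let t ∈ 𝔽₂ⁿ be a vector of odd Hamming weight. Let C⁰ be the subcode of C consisting of all codewords orthogonal to t, and let C¹, C², C³ be the cosets of C⁰ such that (C⁰)⊥ = C⁰ ∪ C¹ ∪ C² ∪ C³, C = C⁰ ∪ C², and t + C = C¹ ∪ C³. Then the code C⁺(t) = ((0,0) × C⁰) ∪ ((1,1) × C²) ∪ ((0,1) × C¹) ∪ ((1,0) × C³) ⊆ 𝔽₂^{n+2} (where (a,b) × D denotes the set of vectors of length n+2 whose first two coordinates are a, b and whose remaining n coordinates form a vector of D) is a self-dual code of length n + 2. -/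
open Finset

/-- A set of binary vectors is a self-dual code if it equals its dual
(this forces it to be a linear subspace). -/
def IsSelfDualSet {n : ℕ} (S : Set (Fin n → ZMod 2)) : Prop := S = dualSet S

/-- The subcode `C⁰` of `C` of codewords orthogonal to `t`. -/
def orthSub {n : ℕ} (C : Submodule (ZMod 2) (Fin n → ZMod 2)) (t : Fin n → ZMod 2) :
    Set (Fin n → ZMod 2) :=
  {c | c ∈ C ∧ ∑ i, t i * c i = 0}

/-- `(a, b) × D`: vectors of length `n + 2` whose first two coordinates are `a, b` and
whose remaining coordinates form a vector of `D`. -/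
def ext2 {n : ℕ} (a b : ZMod 2) (D : Set (Fin n → ZMod 2)) : Set (Fin (n + 2) → ZMod 2) :=
  (fun x => Fin.cons a (Fin.cons b x)) '' D

theorem z2_cases (a : ZMod 2) : a = 0 ∨ a = 1 := by
  revert a; decide

theorem mem_ext2 {n : ℕ} (a b : ZMod 2) (D : Set (Fin n → ZMod 2)) (x : Fin (n + 2) → ZMod 2) :
    x ∈ ext2 a b D ↔ x 0 = a ∧ x 1 = b ∧ (fun i : Fin n => x i.succ.succ) ∈ D := by
  constructor
  · rintro ⟨y, hy, rfl⟩
    exact ⟨rfl, rfl, hy⟩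
  · rintro ⟨h0, h1, h⟩
    refine ⟨_, h, ?_⟩
    funext i
    refine Fin.cases ?_ (fun i => Fin.cases ?_ (fun i => ?_) i) i
    · exact h0.symm
    · exact h1.symm
    · rfl

theorem dot_self_wt {n : ℕ} (x : Fin n → ZMod 2) : x ⬝ᵥ x = (wt x : ZMod 2) := by
  have h : ∀ a : ZMod 2, a * a = if a ≠ 0 then 1 else 0 := by decide
  simp only [dotProduct, wt, hammingNorm, h, Finset.sum_boole]

theorem add_self_vec {n : ℕ} (x : Fin n → ZMod 2) : x + x = 0 := by
  funext i
  exact CharTwo.add_self_eq_zero (x i)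

theorem mem_coset {n : ℕ} (C : Submodule (ZMod 2) (Fin n → ZMod 2)) (t v x : Fin n → ZMod 2) :
    x ∈ (v + ·) '' orthSub C t ↔ x + v ∈ C ∧ t ⬝ᵥ x = t ⬝ᵥ v := by
  constructor
  · rintro ⟨c, ⟨hc, hc0⟩, rfl⟩
    have hc0 : t ⬝ᵥ c = 0 := hc0
    refine ⟨?_, ?_⟩
    · have : v + c + v = c := by
        rw [add_right_comm, add_self_vec, zero_add]
      simpa [this] using hc
    · simp [dotProduct_add, hc0]
  · rintro ⟨h1, h2⟩
    refine ⟨x + v, ⟨h1, ?_⟩, ?_⟩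
    · change t ⬝ᵥ (x + v) = 0
      rw [dotProduct_add, h2, CharTwo.add_self_eq_zero]
    · change v + (x + v) = x
      rw [add_left_comm, add_self_vec, add_zero]

/-- Tsai's construction: for a singly even self-dual code `C` of length `n`, a vector `t`
of odd weight, `C⁰` the subcode of codewords orthogonal to `t`, and cosets `C¹, C², C³` of
`C⁰` with `(C⁰)^⊥ = C⁰ ∪ C¹ ∪ C² ∪ C³`, `C = C⁰ ∪ C²` and `t + C = C¹ ∪ C³`, the code
`C⁺(t) = (0,0,C⁰) ∪ (1,1,C²) ∪ (0,1,C¹) ∪ (1,0,C³)` is a self-dual code of length `n+2`. -/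
theorem tsai_extension (n : ℕ) (C : Submodule (ZMod 2) (Fin n → ZMod 2))
    (hse : IsSinglyEvenSelfDual C)
    (t : Fin n → ZMod 2) (htodd : ¬ 2 ∣ wt t)
    (C1 C2 C3 : Set (Fin n → ZMod 2))
    (hc1 : ∃ v, C1 = (v + ·) '' orthSub C t)
    (hc2 : ∃ v, C2 = (v + ·) '' orthSub C t)
    (hc3 : ∃ v, C3 = (v + ·) '' orthSub C t)
    (hdual : dualSet (orthSub C t) = orthSub C t ∪ C1 ∪ C2 ∪ C3)
    (hC : (C : Set (Fin n → ZMod 2)) = orthSub C t ∪ C2)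
    (hT : (t + ·) '' (C : Set (Fin n → ZMod 2)) = C1 ∪ C3) :
    IsSelfDualSet (ext2 0 0 (orthSub C t) ∪ ext2 1 1 C2 ∪ ext2 0 1 C1 ∪ ext2 1 0 C3) := by
  obtain ⟨hsd, -⟩ := hse
  have hsd' : ∀ x, x ∈ C ↔ ∀ y ∈ C, x ⬝ᵥ y = 0 := fun x => Set.ext_iff.1 hsd x
  have tt : t ⬝ᵥ t = 1 := by
    rcases z2_cases (t ⬝ᵥ t) with h | h
    · rw [dot_self_wt, ZMod.natCast_eq_zero_iff] at h
      exact absurd h htodd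
    · exact h
  have m0 : ∀ x, x ∈ orthSub C t ↔ x ∈ C ∧ t ⬝ᵥ x = 0 := fun x => Iff.rfl
  -- a codeword not orthogonal to `t`
  obtain ⟨u, huC, hu⟩ : ∃ u ∈ C, t ⬝ᵥ u = 1 := by
    have sq : ∀ x : Fin n → ZMod 2, x ⬝ᵥ 1 = x ⬝ᵥ x := by
      intro x
      have h : ∀ a : ZMod 2, a * 1 = a * a := by decide
      simp only [dotProduct, Pi.one_apply, h]
    refine ⟨1, ?_, by rw [sq, tt]⟩
    rw [hsd']
    intro y hy
    rw [dotProduct_comm, sq]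
    exact (hsd' y).1 hy y hy
  have m2 : ∀ x, x ∈ C2 ↔ x ∈ C ∧ t ⬝ᵥ x = 1 := by
    obtain ⟨v, rfl⟩ := hc2
    have hu2 := (Set.ext_iff.1 hC u).1 huC
    rw [Set.mem_union, m0, mem_coset] at hu2
    have hv : u + v ∈ C ∧ t ⬝ᵥ u = t ⬝ᵥ v := by
      rcases hu2 with h | h
      · rw [hu] at h
        exact absurd h.2 one_ne_zero
      · exact h
    have hvC : v ∈ C := (C.add_mem_iff_right huC).1 hv.1
    intro x
    rw [mem_coset, ← hv.2, hu, C.add_mem_iff_left hvC]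
  have mT : ∀ x, x ∈ (t + ·) '' (C : Set (Fin n → ZMod 2)) ↔ x + t ∈ C := by
    intro x
    constructor
    · rintro ⟨c, hc, rfl⟩
      change t + c + t ∈ C
      rwa [add_right_comm, add_self_vec, zero_add]
    · intro h
      refine ⟨x + t, h, ?_⟩
      change t + (x + t) = x
      rw [add_left_comm, add_self_vec, add_zero]
  have hT' : ∀ x, x + t ∈ C ↔ x ∈ C1 ∨ x ∈ C3 := fun x => by
    rw [← mT, hT]; rfl
  have key : ∀ D : Set (Fin n → ZMod 2), (∃ v, D = (v + ·) '' orthSub C t) →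
      (∀ x ∈ D, x + t ∈ C) → ∃ e, ∀ x, x ∈ D ↔ x + t ∈ C ∧ t ⬝ᵥ x = e := by
    rintro D ⟨v, rfl⟩ hD
    have hv := hD v ((mem_coset _ _ _ _).2 ⟨by rw [add_self_vec]; exact C.zero_mem, rfl⟩)
    refine ⟨t ⬝ᵥ v, fun x => ?_⟩
    have hx : x + v + (v + t) = x + t := by
      rw [add_assoc, ← add_assoc v, add_self_vec, zero_add]
    rw [mem_coset, ← hx, C.add_mem_iff_left hv]
  obtain ⟨e, m1⟩ := key C1 hc1 (fun x hx => (hT' x).2 (Or.inl hx))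
  obtain ⟨f, m3⟩ := key C3 hc3 (fun x hx => (hT' x).2 (Or.inr hx))
  have cov : ∀ x, x + t ∈ C → t ⬝ᵥ x = e ∨ t ⬝ᵥ x = f := by
    intro x hx
    rcases (hT' x).1 hx with h | h
    · exact Or.inl ((m1 x).1 h).2
    · exact Or.inr ((m3 x).1 h).2
  have tt0 : t + t ∈ C := by rw [add_self_vec]; exact C.zero_mem
  have tu : u + t + t ∈ C := by rw [add_assoc, add_self_vec, add_zero]; exact huC
  have tudot : t ⬝ᵥ (u + t) = 0 := by
    rw [dotProduct_add, hu, tt]; decide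
  have hf : f = e + 1 := by
    have h1 := cov t tt0
    have h2 := cov _ tu
    rw [tt] at h1
    rw [tudot] at h2
    revert h1 h2
    clear * -
    revert e f
    decide
  subst hf
  -- pairings
  have p00 : ∀ x y, x ∈ C → y ∈ C → x ⬝ᵥ y = 0 := fun x y hx hy => (hsd' x).1 hx y hy
  have p01 : ∀ x y, x ∈ C → y + t ∈ C → x ⬝ᵥ y = t ⬝ᵥ x := by
    intro x y hx hy
    have h := p00 x _ hx hy
    rw [dotProduct_add, dotProduct_comm x t] at h
    exact CharTwo.add_eq_zero.1 h
  have p10 : ∀ x y, x + t ∈ C → y ∈ C → x ⬝ᵥ y = t ⬝ᵥ y := by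
    intro x y hx hy
    rw [dotProduct_comm, p01 y x hy hx]
  have p11 : ∀ x y, x + t ∈ C → y + t ∈ C → x ⬝ᵥ y = t ⬝ᵥ x + t ⬝ᵥ y + 1 := by
    intro x y hx hy
    have h := p10 x _ hx hy
    rw [dotProduct_add, dotProduct_add, tt, dotProduct_comm x t] at h
    generalize x ⬝ᵥ y = a at *
    generalize t ⬝ᵥ y = b at *
    generalize t ⬝ᵥ x = c at *
    revert h
    clear * -
    revert a b c
    decide
  -- a vector of `C1`
  obtain ⟨w, hw, hwe⟩ : ∃ w, w + t ∈ C ∧ t ⬝ᵥ w = e := by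
    rcases z2_cases e with rfl | rfl
    · exact ⟨_, tu, tudot⟩
    · exact ⟨_, tt0, tt⟩
  have mS : ∀ x : Fin (n + 2) → ZMod 2,
      x ∈ ext2 0 0 (orthSub C t) ∪ ext2 1 1 C2 ∪ ext2 0 1 C1 ∪ ext2 1 0 C3 ↔
      (x 0 = x 1 ∧ (fun i : Fin n => x i.succ.succ) ∈ C ∧
        t ⬝ᵥ (fun i : Fin n => x i.succ.succ) = x 0) ∨
      (x 0 = x 1 + 1 ∧ (fun i : Fin n => x i.succ.succ) + t ∈ C ∧
        t ⬝ᵥ (fun i : Fin n => x i.succ.succ) = e + x 0) := by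
    intro x
    simp only [Set.mem_union, mem_ext2, m0, m1, m2, m3]
    generalize (fun i : Fin n => x i.succ.succ) = y
    generalize t ⬝ᵥ y = d
    generalize x 0 = a
    generalize x 1 = b
    generalize (y ∈ C) = P
    generalize (y + t ∈ C) = Q
    clear * -
    rcases z2_cases a with rfl | rfl <;> rcases z2_cases b with rfl | rfl <;>
      simp [CharTwo.add_self_eq_zero]
  have dotS : ∀ x y : Fin (n + 2) → ZMod 2, ∑ i, x i * y i = x 0 * y 0 + (x 1 * y 1 +
      (fun i : Fin n => x i.succ.succ) ⬝ᵥ (fun i : Fin n => y i.succ.succ)) := by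
    intro x y
    rw [Fin.sum_univ_succ, Fin.sum_univ_succ]
    rfl
  unfold IsSelfDualSet
  ext x
  constructor
  · intro hx y hy
    rw [mS] at hx hy
    rw [dotS]
    generalize (fun i : Fin n => x i.succ.succ) = x' at *
    generalize (fun i : Fin n => y i.succ.succ) = y' at *
    generalize x 0 = a at *
    generalize x 1 = b at *
    generalize y 0 = c at *
    generalize y 1 = d at *
    rcases hx with ⟨h1, h2, h3⟩ | ⟨h1, h2, h3⟩ <;> rcases hy with ⟨k1, k2, k3⟩ | ⟨k1, k2, k3⟩
    · rw [p00 _ _ h2 k2, h1, k1]; clear * -; revert b d; decide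
    · rw [p01 _ _ h2 k2, h3, h1, k1]; clear * -; revert b d; decide
    · rw [p10 _ _ h2 k2, k3, h1, k1]; clear * -; revert b d; decide
    · rw [p11 _ _ h2 k2, h3, k3, h1, k1]; clear * -; revert b d e; decide
  · intro hx
    have hx' : ∀ (c d : ZMod 2) (y : Fin n → ZMod 2),
        (c = d ∧ y ∈ C ∧ t ⬝ᵥ y = c) ∨ (c = d + 1 ∧ y + t ∈ C ∧ t ⬝ᵥ y = e + c) →
        x 0 * c + (x 1 * d + (fun i : Fin n => x i.succ.succ) ⬝ᵥ y) = 0 := by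
      intro c d y h
      have := hx (Fin.cons c (Fin.cons d y)) ((mS _).2 h)
      rw [dotS] at this
      exact this
    rw [mS]
    have hd : (fun i : Fin n => x i.succ.succ) ∈ dualSet (orthSub C t) := by
      intro y hy
      have := hx' 0 0 y (Or.inl ⟨rfl, hy⟩)
      rw [mul_zero, mul_zero, zero_add, zero_add] at this
      exact this
    have q1 := hx' 1 1 u (Or.inl ⟨rfl, huC, hu⟩)
    have q2 := hx' 0 1 w (Or.inr ⟨by decide, hw, by rw [hwe, add_zero]⟩)
    rw [hdual] at hd
    simp only [Set.mem_union, m0, m1, m2, m3] at hd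
    generalize (fun i : Fin n => x i.succ.succ) = x' at *
    generalize x 0 = a at *
    generalize x 1 = b at *
    have hd' : x' ∈ C ∨ x' + t ∈ C := by tauto
    rcases hd' with h | h
    · left
      rw [p00 _ _ h huC] at q1
      rw [p01 _ _ h hw] at q2
      refine ⟨?_, h, ?_⟩
      · clear * - q1; revert a b; decide
      · generalize t ⬝ᵥ x' = r at *
        clear * - q1 q2; revert a b r; decide
    · right
      rw [p10 _ _ h huC, hu] at q1
      rw [p11 _ _ h hw, hwe] at q2
      refine ⟨?_, h, ?_⟩
      · clear * - q1; revert a b; decide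
      · generalize t ⬝ᵥ x' = r at *
        clear * - q1 q2; revert a b r e; decide
end

section
/- Let C be a self-dual code of length n (n even, n ≥ 2). Then the number of self-dual codes C′ of length n with C′ ≠ C and dim(C ∩ C′) = n/2 − 1 (i.e., the number of self-dual neighbors of C) is exactly 2·(2^{n/2 − 1} − 1). -/
open Finset

namespace NeighborCount

lemma finrank_selfDual {n : ℕ} {C : Submodule (ZMod 2) (Fin n → ZMod 2)} (hC : IsSelfDual C) :
    2 * Module.finrank (ZMod 2) C = n := by
  let B : LinearMap.BilinForm (ZMod 2) (Fin n → ZMod 2) := dotProductBilin (ZMod 2) (ZMod 2)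
  have hBdef : ∀ x y, B x y = ∑ i, x i * y i := fun x y => rfl
  have hr : B.IsRefl := by
    intro x y h
    rw [hBdef] at h ⊢
    rw [← h]
    exact Finset.sum_congr rfl fun i _ => mul_comm _ _
  have hnd : B.Nondegenerate := by
    refine (LinearMap.IsRefl.nondegenerate_iff_separatingLeft hr).2 ?_
    intro x hx
    funext i
    have := hx (Pi.single i 1)
    rw [hBdef] at this
    simpa [Pi.single_apply] using this
  have h := LinearMap.BilinForm.finrank_orthogonal hnd C
  have hCo : B.orthogonal C = C := by
    ext x
    have h1 : x ∈ C ↔ x ∈ dualSet (C : Set (Fin n → ZMod 2)) := by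
      rw [← hC]; rfl
    rw [h1, LinearMap.BilinForm.mem_orthogonal_iff]
    constructor
    · intro h y hy
      exact hr _ _ (h y hy)
    · intro h y hy
      exact hr _ _ (h y hy)
  rw [hCo] at h
  have hle := Submodule.finrank_le C
  simp only [Module.finrank_fin_fun] at h hle
  omega

/-- functional `c ↦ ∑ c i * x i` -/
noncomputable def dotl {n : ℕ} (x : Fin n → ZMod 2) : (Fin n → ZMod 2) →ₗ[ZMod 2] ZMod 2 :=
  dotProductBilin (ZMod 2) (ZMod 2) x

lemma dotl_apply {n : ℕ} (x y : Fin n → ZMod 2) : dotl x y = ∑ i, x i * y i := rfl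

lemma dotl_comm {n : ℕ} (x y : Fin n → ZMod 2) : dotl x y = dotl y x := by
  simp only [dotl_apply]
  exact Finset.sum_congr rfl fun i _ => mul_comm _ _

lemma dotl_self {n : ℕ} (x : Fin n → ZMod 2) : dotl x x = ∑ i, x i := by
  simp only [dotl_apply]
  refine Finset.sum_congr rfl fun i _ => ?_
  generalize x i = a
  revert a
  decide

lemma mem_iff {n : ℕ} {C : Submodule (ZMod 2) (Fin n → ZMod 2)} (hC : IsSelfDual C)
    (x : Fin n → ZMod 2) : x ∈ C ↔ ∀ y ∈ C, dotl x y = 0 := by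
  have h1 : x ∈ C ↔ x ∈ dualSet (C : Set (Fin n → ZMod 2)) := by
    rw [← hC]; rfl
  exact h1

lemma exists_one {n : ℕ} {C : Submodule (ZMod 2) (Fin n → ZMod 2)} (hC : IsSelfDual C)
    {x : Fin n → ZMod 2} (hx : x ∉ C) : ∃ c ∈ C, dotl x c = 1 := by
  rw [mem_iff hC] at hx
  push Not at hx
  obtain ⟨c, hc, h⟩ := hx
  refine ⟨c, hc, ?_⟩
  generalize dotl x c = a at h
  revert a
  decide

lemma finrank_sub {n : ℕ} {C : Submodule (ZMod 2) (Fin n → ZMod 2)} (hC : IsSelfDual C)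
    {x : Fin n → ZMod 2} (hx : x ∉ C) :
    Module.finrank (ZMod 2) ↥(C ⊓ LinearMap.ker (dotl x)) + 1 = Module.finrank (ZMod 2) C := by
  obtain ⟨c, hc, h⟩ := exists_one hC hx
  have hne : (dotl x).domRestrict C ≠ 0 := by
    intro h0
    have := LinearMap.congr_fun h0 ⟨c, hc⟩
    simp [LinearMap.domRestrict_apply, h] at this
  have h2 := Module.Dual.finrank_ker_add_one_of_ne_zero (f := (dotl x).domRestrict C) hne
  rw [← h2]
  congr 1
  rw [LinearMap.ker_domRestrict]
  rw [← Submodule.map_comap_subtype]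
  exact LinearEquiv.finrank_eq (Submodule.equivSubtypeMap C _).symm

lemma neighbor_eq {n : ℕ} {C D : Submodule (ZMod 2) (Fin n → ZMod 2)} (hn2 : 2 ≤ n)
    (hC : IsSelfDual C) (hD : IsSelfDual D)
    (hr : Module.finrank (ZMod 2) ↥(C ⊓ D) = n / 2 - 1)
    {x : Fin n → ZMod 2} (hxD : x ∈ D) (hxC : x ∉ C) :
    D = (C ⊓ LinearMap.ker (dotl x)) ⊔ Submodule.span (ZMod 2) {x} := by
  have h1 := finrank_sub hC hxC
  have h2 := finrank_selfDual hC
  have h3 := finrank_selfDual hD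
  have hle : C ⊓ D ≤ C ⊓ LinearMap.ker (dotl x) := by
    intro y hy
    exact ⟨hy.1, (mem_iff hD x).1 hxD y hy.2⟩
  have heq : C ⊓ D = C ⊓ LinearMap.ker (dotl x) :=
    Submodule.eq_of_le_of_finrank_le hle (by omega)
  rw [← heq]
  symm
  apply Submodule.eq_of_le_of_finrank_le
  · refine sup_le inf_le_right ?_
    rw [Submodule.span_singleton_le_iff_mem]
    exact hxD
  · have hlt : C ⊓ D < (C ⊓ D) ⊔ Submodule.span (ZMod 2) {x} := by
      refine lt_of_le_of_ne le_sup_left ?_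
      intro h
      apply hxC
      have : x ∈ C ⊓ D := by
        rw [h]
        exact Submodule.mem_sup_right (Submodule.mem_span_singleton_self x)
      exact this.1
    have := Submodule.finrank_lt_finrank_of_lt hlt
    omega

lemma neighbor_exists {n : ℕ} {C : Submodule (ZMod 2) (Fin n → ZMod 2)}
    (hC : IsSelfDual C) {x : Fin n → ZMod 2} (hxC : x ∉ C) (hxx : dotl x x = 0) :
    ∃ D : Submodule (ZMod 2) (Fin n → ZMod 2), (IsSelfDual D ∧ D ≠ C ∧
      Module.finrank (ZMod 2) ↥(C ⊓ D) = n / 2 - 1) ∧ x ∈ D := by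
  set D := (C ⊓ LinearMap.ker (dotl x)) ⊔ Submodule.span (ZMod 2) {x} with hDdef
  have hxD : x ∈ D := Submodule.mem_sup_right (Submodule.mem_span_singleton_self x)
  have hform : ∀ y, y ∈ D ↔ ∃ c ∈ C, dotl x c = 0 ∧ ∃ a : ZMod 2, c + a • x = y := by
    intro y
    rw [hDdef, Submodule.mem_sup]
    constructor
    · rintro ⟨c, hc, z, hz, rfl⟩
      obtain ⟨a, rfl⟩ := Submodule.mem_span_singleton.1 hz
      exact ⟨c, hc.1, hc.2, a, rfl⟩
    · rintro ⟨c, hc, hc2, a, rfl⟩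
      exact ⟨c, ⟨hc, hc2⟩, _, Submodule.mem_span_singleton.2 ⟨a, rfl⟩, rfl⟩
  have hxo : ∀ y ∈ D, dotl x y = 0 := by
    intro y hy
    obtain ⟨c, hc, h, a, rfl⟩ := (hform y).1 hy
    simp [h, hxx]
  have hself : IsSelfDual D := by
    ext y
    change y ∈ D ↔ ∀ z ∈ D, dotl y z = 0
    constructor
    · intro hy z hz
      obtain ⟨c, hc, h, a, rfl⟩ := (hform y).1 hy
      have hz0 := hxo z hz
      obtain ⟨d, hd, h', b, rfl⟩ := (hform z).1 hz
      rw [dotl_comm, map_add, map_smul, dotl_comm _ x, hz0, dotl_comm, map_add, map_smul,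
        dotl_comm c x, h, (mem_iff hC c).1 hc d hd]
      simp
    · intro hy
      obtain ⟨c0, hc0, h1⟩ := exists_one hC hxC
      have hyx : dotl x y = 0 := by rw [dotl_comm]; exact hy x hxD
      have hmem : y - dotl y c0 • x ∈ C := by
        rw [mem_iff hC]
        intro c hc
        have hcD : c - dotl x c • c0 ∈ D := by
          rw [hform]
          refine ⟨_, C.sub_mem hc (C.smul_mem (dotl x c) hc0), ?_, 0, by simp⟩
          simp [h1]
        have := hy _ hcD
        rw [map_sub, map_smul] at this
        rw [dotl_comm, map_sub, map_smul, dotl_comm c y, dotl_comm c x, ← this]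
        simp only [smul_eq_mul]
        ring
      rw [hform]
      refine ⟨_, hmem, ?_, dotl y c0, by simp⟩
      simp [hyx, hxx]
  refine ⟨D, ⟨hself, ?_, ?_⟩, hxD⟩
  · intro h
    exact hxC (h ▸ hxD)
  · have : C ⊓ D = C ⊓ LinearMap.ker (dotl x) := by
      apply le_antisymm
      · intro y hy
        exact ⟨hy.1, hxo y hy.2⟩
      · intro y hy
        exact ⟨hy.1, Submodule.mem_sup_left hy⟩
    rw [this]
    have h1 := finrank_sub hC hxC
    have h2 := finrank_selfDual hC
    omega

lemma natCard_sdiff {n : ℕ} (D E : Submodule (ZMod 2) (Fin n → ZMod 2)) :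
    Nat.card {x : Fin n → ZMod 2 // x ∈ D ∧ x ∉ E} =
      2 ^ Module.finrank (ZMod 2) D - 2 ^ Module.finrank (ZMod 2) ↥(E ⊓ D) := by
  have hc : ∀ F : Submodule (ZMod 2) (Fin n → ZMod 2),
      (F : Set (Fin n → ZMod 2)).ncard = 2 ^ Module.finrank (ZMod 2) F := by
    intro F
    have := Module.natCard_eq_pow_finrank (K := ZMod 2) (V := F)
    rw [Nat.card_zmod] at this
    exact this
  have h1 : Nat.card {x : Fin n → ZMod 2 // x ∈ D ∧ x ∉ E} =
      ((D : Set (Fin n → ZMod 2)) \ ((E ⊓ D : Submodule (ZMod 2) (Fin n → ZMod 2)) :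
        Set (Fin n → ZMod 2))).ncard := by
    rw [← Nat.card_coe_set_eq]
    refine Nat.card_congr (Equiv.subtypeEquivRight ?_)
    intro x
    simp only [Set.mem_sdiff, SetLike.mem_coe, Submodule.mem_inf]
    tauto
  rw [h1, Set.ncard_sdiff (fun x hx => hx.2) (Set.toFinite _), hc, hc]

end NeighborCount

open NeighborCount

/-- A self-dual code `C` of even length `n ≥ 2` has exactly `2(2^{n/2-1} - 1)` self-dual
neighbors, i.e. self-dual codes `D ≠ C` with `dim (C ⊓ D) = n/2 - 1`. -/
theorem card_selfDual_neighbors (n : ℕ) (hn : 2 ∣ n) (hn2 : 2 ≤ n)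
    (C : Submodule (ZMod 2) (Fin n → ZMod 2)) (hC : IsSelfDual C) :
    Nat.card {D : Submodule (ZMod 2) (Fin n → ZMod 2) //
        IsSelfDual D ∧ D ≠ C ∧ Module.finrank (ZMod 2) ↥(C ⊓ D) = n / 2 - 1} =
      2 * (2 ^ (n / 2 - 1) - 1) := by
  classical
  obtain ⟨m, rfl⟩ := hn
  have hm : 2 * m / 2 = m := by omega
  obtain ⟨k, rfl⟩ : ∃ k, m = k + 1 := ⟨m - 1, by omega⟩
  have hk : 2 * (k + 1) / 2 - 1 = k := by omega
  have hCr := finrank_selfDual hC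
  have hker1 : dotl (1 : Fin (2 * (k + 1)) → ZMod 2) ≠ 0 := by
    intro h
    have := LinearMap.congr_fun h (Pi.single ⟨0, by omega⟩ 1)
    simp [dotl_apply] at this
  have hker := Module.Dual.finrank_ker_add_one_of_ne_zero hker1
  rw [Module.finrank_fin_fun] at hker
  have hkmem : ∀ x, x ∈ LinearMap.ker (dotl (1 : Fin (2 * (k + 1)) → ZMod 2)) ↔
      dotl x x = 0 := by
    intro x
    rw [LinearMap.mem_ker, dotl_self, dotl_apply]
    simp
  have hT := natCard_sdiff (LinearMap.ker (dotl (1 : Fin (2 * (k + 1)) → ZMod 2))) C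
  have hCk : C ⊓ LinearMap.ker (dotl (1 : Fin (2 * (k + 1)) → ZMod 2)) = C := by
    rw [inf_eq_left]
    intro x hx
    rw [hkmem]
    exact (mem_iff hC x).1 hx x hx
  rw [hCk] at hT
  set N := {D : Submodule (ZMod 2) (Fin (2 * (k + 1)) → ZMod 2) //
        IsSelfDual D ∧ D ≠ C ∧ Module.finrank (ZMod 2) ↥(C ⊓ D) = 2 * (k + 1) / 2 - 1} with hN
  let f : (Σ D : N, {x : Fin (2 * (k + 1)) → ZMod 2 // x ∈ D.1 ∧ x ∉ C}) →
      {x : Fin (2 * (k + 1)) → ZMod 2 //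
        x ∈ LinearMap.ker (dotl (1 : Fin (2 * (k + 1)) → ZMod 2)) ∧ x ∉ C} :=
    fun p => ⟨p.2.1, (hkmem _).2 ((mem_iff p.1.2.1 _).1 p.2.2.1 _ p.2.2.1), p.2.2.2⟩
  have hf : Function.Bijective f := by
    constructor
    · rintro ⟨⟨D, hD⟩, ⟨x, hx⟩⟩ ⟨⟨D', hD'⟩, ⟨x', hx'⟩⟩ h
      have hxx : x = x' := congrArg Subtype.val h
      subst hxx
      have : D = D' := (neighbor_eq hn2 hC hD.1 hD.2.2 hx.1 hx.2).trans
        (neighbor_eq hn2 hC hD'.1 hD'.2.2 hx'.1 hx'.2).symm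
      subst this
      rfl
    · rintro ⟨x, hx, hxC⟩
      obtain ⟨D, hD, hxD⟩ := neighbor_exists hC hxC ((hkmem x).1 hx)
      exact ⟨⟨⟨D, hD⟩, ⟨x, hxD, hxC⟩⟩, rfl⟩
  haveI : Finite (Submodule (ZMod 2) (Fin (2 * (k + 1)) → ZMod 2)) :=
    Finite.of_injective _ SetLike.coe_injective
  haveI : Finite N := Subtype.finite
  haveI : Fintype N := Fintype.ofFinite N
  have hcard := Nat.card_eq_of_bijective f hf
  rw [hT, Nat.card_sigma] at hcard
  have hfib : ∀ D : N, Nat.card {x : Fin (2 * (k + 1)) → ZMod 2 // x ∈ D.1 ∧ x ∉ C} = 2 ^ k := by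
    intro D
    have hDr := finrank_selfDual D.2.1
    rw [natCard_sdiff, D.2.2.2.trans hk, show Module.finrank (ZMod 2) D.1 = k + 1 by omega, pow_succ]
    omega
  rw [Finset.sum_congr rfl (fun D _ => hfib D), Finset.sum_const, Finset.card_univ, smul_eq_mul,
    ← Nat.card_eq_fintype_card,
    show Module.finrank (ZMod 2) C = k + 1 by omega,
    Nat.eq_sub_of_add_eq hker] at hcard
  rw [hk]
  apply Nat.eq_of_mul_eq_mul_right (show 0 < 2 ^ k by positivity)
  rw [hcard, show 2 * (k + 1) - 1 = k + k + 1 by omega, mul_assoc, Nat.sub_mul, Nat.mul_sub]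
  congr 1 <;> ring
end
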